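/- Let a ∈ C^{0,α}(Ω̄) with a ≥ 0, α ∈ (0,1], and let q ∈ C^{0,σ}(Ω̄) with σ ∈ (0,1] and q(x) ≥ p₀ > 1 bounded above. Fix a ball B ⊂ Ω and set q₂ = sup_B q. Then the function ã(x) = (a(x))^{q₂/q(x)} is Hölder continuous on B with exponent β = min{α,σ}, i.e. ã ∈ C^{0,β}(B). -/

import Mathlib

open MeasureTheory Metric Set

noncomputable section

/-- Euclidean space `ℝⁿ`. -/
abbrev En (n : ℕ) : Type := EuclideanSpace ℝ (Fin n)

lemma aux_base {A S s u v : ℝ} (hA : 1 ≤ A) (hs : 1 ≤ s) (hS : s ≤ S)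
    (hu : u ∈ Icc 0 A) (hv : v ∈ Icc 0 A) :
    |u ^ s - v ^ s| ≤ S * A ^ S * |u - v| := by
  have := (convex_Icc (0:ℝ) A).norm_image_sub_le_of_norm_hasDerivWithin_le
    (f := fun t => t ^ s) (f' := fun t => s * t ^ (s - 1)) (C := S * A ^ S)
    (fun x _ => (Real.hasDerivAt_rpow_const (Or.inr hs)).hasDerivWithinAt) ?_ hv hu
  · simpa [Real.norm_eq_abs] using this
  · intro x hx
    have h0 : 0 ≤ x ^ (s - 1) := Real.rpow_nonneg hx.1 _
    rw [Real.norm_eq_abs, abs_of_nonneg (by positivity)]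
    have h1 : x ^ (s - 1) ≤ A ^ (s - 1) := Real.rpow_le_rpow hx.1 hx.2 (by linarith)
    have h2 : A ^ (s - 1) ≤ A ^ S := Real.rpow_le_rpow_of_exponent_le hA (by linarith)
    exact mul_le_mul hS (h1.trans h2) h0 (by linarith)

lemma aux_exp {A S s t u : ℝ} (hA : 1 ≤ A) (hs : s ∈ Icc 1 S) (ht : t ∈ Icc 1 S)
    (hu : u ∈ Icc 0 A) :
    |u ^ s - u ^ t| ≤ A ^ S * (A ^ 2 + 1) * |s - t| := by
  rcases hu.1.eq_or_lt with h | hpos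
  · subst h
    rw [Real.zero_rpow (by linarith [hs.1]), Real.zero_rpow (by linarith [ht.1])]
    simp only [sub_zero, abs_zero]
    positivity
  have := (convex_Icc (1:ℝ) S).norm_image_sub_le_of_norm_hasDerivWithin_le
    (f := fun t => u ^ t) (f' := fun t => u ^ t * Real.log u) (C := A ^ S * (A ^ 2 + 1))
    (fun x _ => (Real.hasStrictDerivAt_const_rpow hpos x).hasDerivAt.hasDerivWithinAt) ?_ ht hs
  · simpa [Real.norm_eq_abs] using this
  · intro x hx
    have h1 : u ^ x = u ^ (x - 1) * u := by
      rw [← Real.rpow_add_one hpos.ne']; ring_nf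
    have h2 : u ^ (x - 1) ≤ A ^ (x - 1) := Real.rpow_le_rpow hu.1 hu.2 (by linarith [hx.1])
    have h3 : A ^ (x - 1) ≤ A ^ S := Real.rpow_le_rpow_of_exponent_le hA (by linarith [hx.2])
    have h4 : |Real.log u| ≤ u + u⁻¹ := by
      have l1 := Real.log_le_sub_one_of_pos hpos
      have l2 := Real.log_le_sub_one_of_pos (inv_pos.2 hpos)
      rw [Real.log_inv] at l2
      have := inv_pos.2 hpos
      rw [abs_le]; constructor <;> linarith
    have h5 : u * |Real.log u| ≤ A ^ 2 + 1 := by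
      calc u * |Real.log u| ≤ u * (u + u⁻¹) := by gcongr
        _ = u ^ 2 + 1 := by field_simp
        _ ≤ A ^ 2 + 1 := by have := hu.2; gcongr
    rw [Real.norm_eq_abs, abs_mul, abs_of_nonneg (Real.rpow_nonneg hu.1 _), h1, mul_assoc]
    exact mul_le_mul (h2.trans h3) h5 (by positivity) (by positivity)

lemma aux_pow {d r σ β : ℝ} (hd : 0 ≤ d) (hdr : d ≤ 2 * r) (hβ : 0 < β) (hβσ : β ≤ σ)
    (hσ : σ ≤ 1) : d ^ σ ≤ (2 * r + 1) * d ^ β := by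
  have h : d ^ σ = d ^ (σ - β) * d ^ β := by
    rw [← Real.rpow_add_of_nonneg hd (by linarith) hβ.le]; ring_nf
  rw [h]
  gcongr
  calc d ^ (σ - β) ≤ (2 * r + 1) ^ (σ - β) := Real.rpow_le_rpow hd (by linarith) (by linarith)
    _ ≤ (2 * r + 1) ^ (1:ℝ) := Real.rpow_le_rpow_of_exponent_le (by linarith) (by linarith)
    _ = 2 * r + 1 := Real.rpow_one _

/-- If `a ∈ C^{0,α}(Ω̄)` is nonnegative and `q ∈ C^{0,σ}(Ω̄)` is bounded between
`p₀ > 1` and `Q`, then on any ball `B ⊆ Ω`, the function `ã(x) = a(x)^{q₂/q(x)}`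
(with `q₂ = sup_B q`) is Hölder continuous with exponent `β = min{α,σ}`. -/
theorem statement8
    (n : ℕ) (hn : 2 ≤ n)
    (Ω : Set (En n)) (hΩo : IsOpen Ω) (hΩb : Bornology.IsBounded Ω)
    (a q : En n → ℝ) (α σ p₀ Q : ℝ)
    (hα : α ∈ Ioc (0:ℝ) 1) (hσ : σ ∈ Ioc (0:ℝ) 1) (hp₀ : 1 < p₀)
    (haHol : ∃ M, ∀ x ∈ closure Ω, ∀ y ∈ closure Ω, |a x - a y| ≤ M * ‖x - y‖ ^ α)
    (hqHol : ∃ M, ∀ x ∈ closure Ω, ∀ y ∈ closure Ω, |q x - q y| ≤ M * ‖x - y‖ ^ σ)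
    (ha : ∀ x ∈ closure Ω, 0 ≤ a x)
    (hq : ∀ x ∈ closure Ω, p₀ ≤ q x ∧ q x ≤ Q)
    (y : En n) (r : ℝ) (hr : 0 < r) (hB : ball y r ⊆ Ω) :
    ∃ Ca : ℝ, ∀ x ∈ ball y r, ∀ x' ∈ ball y r,
      |a x ^ (sSup (q '' ball y r) / q x) - a x' ^ (sSup (q '' ball y r) / q x')| ≤
        Ca * ‖x - x'‖ ^ min α σ := by
  obtain ⟨M₀, hM₀⟩ := haHol
  obtain ⟨N₀, hN₀⟩ := hqHol
  have hBc : ball y r ⊆ closure Ω := hB.trans subset_closure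
  have hyB : y ∈ ball y r := mem_ball_self hr
  set q₂ := sSup (q '' ball y r) with hq₂
  set β := min α σ with hβ
  have hβ0 : 0 < β := lt_min hα.1 hσ.1
  obtain ⟨M, hM0, hM⟩ : ∃ M : ℝ, 0 ≤ M ∧ ∀ x ∈ ball y r, ∀ x' ∈ ball y r,
      |a x - a x'| ≤ M * ‖x - x'‖ ^ α :=
    ⟨max M₀ 0, le_max_right _ _, fun x hx x' hx' => (hM₀ x (hBc hx) x' (hBc hx')).trans
      (mul_le_mul_of_nonneg_right (le_max_left _ _) (by positivity))⟩
  obtain ⟨N, hN0, hN⟩ : ∃ M : ℝ, 0 ≤ M ∧ ∀ x ∈ ball y r, ∀ x' ∈ ball y r,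
      |q x - q x'| ≤ M * ‖x - x'‖ ^ σ :=
    ⟨max N₀ 0, le_max_right _ _, fun x hx x' hx' => (hN₀ x (hBc hx) x' (hBc hx')).trans
      (mul_le_mul_of_nonneg_right (le_max_left _ _) (by positivity))⟩
  have hbdd : BddAbove (q '' ball y r) := by
    refine ⟨Q, ?_⟩
    rintro _ ⟨x, hx, rfl⟩
    exact (hq x (hBc hx)).2
  have hle : ∀ x ∈ ball y r, q x ≤ q₂ := fun x hx => le_csSup hbdd ⟨x, hx, rfl⟩
  have hq1 : ∀ x ∈ ball y r, 1 < q x := fun x hx => hp₀.trans_le (hq x (hBc hx)).1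
  have hq₂1 : 1 < q₂ := (hq1 y hyB).trans_le (hle y hyB)
  have hs : ∀ x ∈ ball y r, q₂ / q x ∈ Icc 1 q₂ := fun x hx => by
    have := hq1 x hx
    exact ⟨(one_le_div (by linarith)).2 (hle x hx), div_le_self (by linarith) this.le⟩
  have hdist : ∀ x ∈ ball y r, ∀ x' ∈ ball y r, ‖x - x'‖ ≤ 2 * r := fun x hx x' hx' => by
    rw [← dist_eq_norm]
    have := dist_triangle_right x x' y
    rw [mem_ball] at hx hx'
    linarith
  set A := 1 + a y + M * (2 * r) ^ α with hA
  have hay : 0 ≤ a y := ha y (hBc hyB)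
  have hA1 : 1 ≤ A := by
    have : 0 ≤ M * (2 * r) ^ α := by positivity
    linarith
  have haA : ∀ x ∈ ball y r, a x ∈ Icc 0 A := fun x hx => by
    refine ⟨ha x (hBc hx), ?_⟩
    have h1 := (abs_le.1 (hM x hx y hyB)).2
    have h2 : M * ‖x - y‖ ^ α ≤ M * (2 * r) ^ α :=
      mul_le_mul_of_nonneg_left
        (Real.rpow_le_rpow (norm_nonneg _) (hdist x hx y hyB) hα.1.le) hM0
    linarith
  refine ⟨q₂ * A ^ q₂ * (M * (2 * r + 1)) +
    A ^ q₂ * (A ^ 2 + 1) * (q₂ * (N * (2 * r + 1))), fun x hx x' hx' => ?_⟩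
  have e1 := aux_base hA1 (hs x hx).1 (hs x hx).2 (haA x hx) (haA x' hx')
  have e2 := aux_exp hA1 (hs x hx) (hs x' hx') (haA x' hx')
  have hd := hdist x hx x' hx'
  have p1 := aux_pow (norm_nonneg _) hd hβ0 (min_le_left α σ) hα.2
  have p2 := aux_pow (norm_nonneg _) hd hβ0 (min_le_right α σ) hσ.2
  have e3 : |a x - a x'| ≤ M * ((2 * r + 1) * ‖x - x'‖ ^ β) :=
    (hM x hx x' hx').trans (mul_le_mul_of_nonneg_left p1 hM0)
  have e4 : |q x - q x'| ≤ N * ((2 * r + 1) * ‖x - x'‖ ^ β) :=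
    (hN x hx x' hx').trans (mul_le_mul_of_nonneg_left p2 hN0)
  have e5 : |q₂ / q x - q₂ / q x'| ≤ q₂ * |q x - q x'| := by
    have k1 := hq1 x hx
    have k2 := hq1 x' hx'
    have k3 : q₂ / q x - q₂ / q x' = q₂ * (q x' - q x) / (q x * q x') := by
      field_simp
    have k4 : 1 ≤ q x * q x' := by nlinarith
    rw [k3, abs_div, abs_mul, abs_of_pos (by linarith : 0 < q₂),
      abs_of_pos (by linarith : 0 < q x * q x'), abs_sub_comm]
    exact div_le_self (by positivity) k4
  have e6 : |q₂ / q x - q₂ / q x'| ≤ q₂ * (N * ((2 * r + 1) * ‖x - x'‖ ^ β)) :=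
    e5.trans (mul_le_mul_of_nonneg_left e4 (by linarith))
  have f1 := mul_le_mul_of_nonneg_left e3 (by positivity : 0 ≤ q₂ * A ^ q₂)
  have f2 := mul_le_mul_of_nonneg_left e6 (by positivity : 0 ≤ A ^ q₂ * (A ^ 2 + 1))
  refine (abs_sub_le _ (a x' ^ (q₂ / q x)) _).trans ?_
  refine (add_le_add (e1.trans f1) (e2.trans f2)).trans (le_of_eq ?_)
  ring
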